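/- Let Q be a finite quiver, s a positive integer, and N_s(Q) the nilpotent quiver algebra over a field k. Then the global dimension of N_s(Q) is at most 2. -/

import Mathlib

noncomputable section

open Function

/-- A finite quiver: finitely many vertices and arrows, with source and target maps. -/
structure FinQuiver where
  V : Type
  E : Type
  [fintypeV : Fintype V]
  [fintypeE : Fintype E]
  [decV : DecidableEq V]
  src : E → V
  tgt : E → V

attribute [instance] FinQuiver.fintypeV FinQuiver.fintypeE FinQuiver.decV

/-- Generators of the staircase quiver `Q^(s)` (0-based layers `0,…,s-1`):
trivial paths `e(i_t)`, vertical arrows `b(i_t) : i_t → i_{t+1}` and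
diagonal arrows `a_{t} : i_{t+1} → j_t` for each arrow `a : i → j` of `Q`. -/
inductive SGen (Q : FinQuiver) (s : ℕ) : Type
  | idem (i : Q.V) (t : Fin s) : SGen Q s
  | vert (i : Q.V) (t : ℕ) (h : t + 1 < s) : SGen Q s
  | diag (a : Q.E) (t : ℕ) (h : t + 1 < s) : SGen Q s

variable (k : Type) [Field k]

namespace SGen

variable {Q : FinQuiver} {s : ℕ}

end SGen

section NsQ

variable (Q : FinQuiver) (s : ℕ)

open FreeAlgebra

/-- The relations defining the nilpotent quiver algebra `N_s(Q)` as a quotient of the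
free algebra on the generators of the staircase quiver: orthogonal idempotent relations
for the trivial paths, source/target relations for the arrows, and the mesh relations
(R1) `a_{t+1} b(i_t) = b(j_{t-1}) a_t` and (R2) `a_2 b(i_1) = 0`. -/
inductive NsRel : FreeAlgebra k (SGen Q s) → FreeAlgebra k (SGen Q s) → Prop
  | idem_mul (i j : Q.V) (t u : Fin s) :
      NsRel (ι k (SGen.idem i t) * ι k (SGen.idem j u))
        (if i = j ∧ t = u then ι k (SGen.idem i t) else 0)
  | one_def : NsRel (∑ i : Q.V, ∑ t : Fin s, ι k (SGen.idem i t)) 1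
  | vert_comp (i : Q.V) (t : ℕ) (h : t + 1 < s) :
      NsRel (ι k (SGen.vert i t h))
        (ι k (SGen.idem i ⟨t + 1, h⟩) * ι k (SGen.vert i t h) *
          ι k (SGen.idem i ⟨t, Nat.lt_of_succ_lt h⟩))
  | diag_comp (a : Q.E) (t : ℕ) (h : t + 1 < s) :
      NsRel (ι k (SGen.diag a t h))
        (ι k (SGen.idem (Q.tgt a) ⟨t, Nat.lt_of_succ_lt h⟩) * ι k (SGen.diag a t h) *
          ι k (SGen.idem (Q.src a) ⟨t + 1, h⟩))
  | mesh (a : Q.E) (t : ℕ) (h : t + 2 < s) :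
      NsRel (ι k (SGen.diag a (t + 1) h) * ι k (SGen.vert (Q.src a) (t + 1) h))
        (ι k (SGen.vert (Q.tgt a) t (by omega)) * ι k (SGen.diag a t (by omega)))
  | mesh0 (a : Q.E) (h : 0 + 1 < s) :
      NsRel (ι k (SGen.diag a 0 h) * ι k (SGen.vert (Q.src a) 0 h)) 0

/-- The nilpotent quiver algebra `N_s(Q)`. -/
def NsQ : Type := RingQuot (NsRel k Q s)

instance : Ring (NsQ k Q s) := by unfold NsQ; infer_instance
instance : Algebra k (NsQ k Q s) := by unfold NsQ; infer_instance

/-- Quotient map onto `N_s(Q)`. -/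
def nmk : FreeAlgebra k (SGen Q s) →ₐ[k] NsQ k Q s := RingQuot.mkAlgHom k (NsRel k Q s)

/-- The trivial path `e(i_t)` as an element of `N_s(Q)` (`0` for out of range `t`). -/
def eV (i : Q.V) (t : ℕ) : NsQ k Q s :=
  if h : t < s then nmk k Q s (FreeAlgebra.ι k (SGen.idem i ⟨t, h⟩)) else 0

/-- The vertical arrow `b(i_t) : i_t → i_{t+1}` in `N_s(Q)` (`0` for out of range `t`). -/
def bV (i : Q.V) (t : ℕ) : NsQ k Q s :=
  if h : t + 1 < s then nmk k Q s (FreeAlgebra.ι k (SGen.vert i t h)) else 0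

/-- The diagonal arrow `a_t : i_{t+1} → j_t` in `N_s(Q)` (`0` for out of range `t`). -/
def aV (a : Q.E) (t : ℕ) : NsQ k Q s :=
  if h : t + 1 < s then nmk k Q s (FreeAlgebra.ι k (SGen.diag a t h)) else 0

/-- The sum `e_t` of the idempotents of layer `t`. -/
def Elayer (t : ℕ) : NsQ k Q s := ∑ i : Q.V, eV k Q s i t

/-- The idempotent `e` of the top layer. -/
def Etop : NsQ k Q s := Elayer k Q s (s - 1)

/-- The path of vertical arrows `b(i_{q-1}) ⋯ b(i_t) : i_t → i_q` in `N_s(Q)`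
(the trivial path when `q ≤ t`). -/
def bChain (i : Q.V) (t : ℕ) : ℕ → NsQ k Q s
  | 0 => eV k Q s i 0
  | q + 1 => if q + 1 ≤ t then eV k Q s i (q + 1) else bV k Q s i q * bChain i t q

end NsQ

section PathAlg

variable (Q : FinQuiver)

/-- Generators of the path algebra `kQ`: trivial paths and arrows. -/
inductive PGen (Q : FinQuiver) : Type
  | idem (i : Q.V) : PGen Q
  | arr (a : Q.E) : PGen Q

open FreeAlgebra

/-- The relations of the path algebra `kQ`. -/
inductive PRel : FreeAlgebra k (PGen Q) → FreeAlgebra k (PGen Q) → Prop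
  | idem_mul (i j : Q.V) :
      PRel (ι k (PGen.idem i) * ι k (PGen.idem j)) (if i = j then ι k (PGen.idem i) else 0)
  | one_def : PRel (∑ i : Q.V, ι k (PGen.idem i)) 1
  | arr_comp (a : Q.E) :
      PRel (ι k (PGen.arr a))
        (ι k (PGen.idem (Q.tgt a)) * ι k (PGen.arr a) * ι k (PGen.idem (Q.src a)))

/-- The path algebra `kQ`. -/
def PathAlg : Type := RingQuot (PRel k Q)

instance : Ring (PathAlg k Q) := by unfold PathAlg; infer_instance
instance : Algebra k (PathAlg k Q) := by unfold PathAlg; infer_instance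

/-- The arrow `a` as an element of the path algebra. -/
def arrP (a : Q.E) : PathAlg k Q := RingQuot.mkAlgHom k (PRel k Q) (ι k (PGen.arr a))

/-- The trivial path `e_i` as an element of the path algebra. -/
def idemP (i : Q.V) : PathAlg k Q := RingQuot.mkAlgHom k (PRel k Q) (ι k (PGen.idem i))

/-- The arrow ideal `J` of `kQ` raised to the power `t`, as the `k`-subspace spanned by
the paths containing at least `t` arrows. -/
def JPow (t : ℕ) : Submodule k (PathAlg k Q) :=
  Submodule.span k {x : PathAlg k Q | ∃ (u v : PathAlg k Q) (l : List Q.E),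
    l.length = t ∧ x = u * (l.map (arrP k Q)).prod * v}

end PathAlg

end

/-!
Call an `N_s(Q)`-module torsion-free if every vertical arrow acts injectively on it; submodules of
torsion-free modules are torsion-free. On a free module the diagonal arrows moreover act
independently modulo the image of the vertical arrows, because composable diagonal words followed by
vertical arrows form a basis. Conversely, a torsion-free module `X` with independent diagonal arrows
is projective: by Nakayama's lemma a minimal generating set gives a surjection from a free module,
and the two properties of `X` force the kernel of this surjection to lie in its own radical.

Independence passes to the kernel of a map `φ : P → X` into a torsion-free module: if `b z ∈ ker φ`
then `b φ(z) = 0`, so `φ(z)` lies in the top layer, and removing the top component of `z` changes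
nothing in `b z`. The first syzygy of any module is torsion-free, being contained in a free module;
the second syzygy is the kernel of a map from a free module to the first one, hence projective.
-/

noncomputable section

namespace NsQ

open Function

variable {k : Type} [Field k] {Q : FinQuiver} {s : ℕ}

lemma nmk_surjective : Surjective (nmk k Q s) :=
  RingQuot.mkAlgHom_surjective k _

lemma nmk_eq_of_rel {x y : FreeAlgebra k (SGen Q s)} (h : NsRel k Q s x y) :
    nmk k Q s x = nmk k Q s y :=
  RingQuot.mkAlgHom_rel k h

/-- The universal property of `N_s(Q)` as the quotient of the free algebra by its relations. -/
def liftAlgHom {A : Type*} [Semiring A] [Algebra k A] (φ : FreeAlgebra k (SGen Q s) →ₐ[k] A)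
    (hφ : ∀ ⦃x y⦄, NsRel k Q s x y → φ x = φ y) : NsQ k Q s →ₐ[k] A :=
  RingQuot.liftAlgHom k ⟨φ, hφ⟩

lemma liftAlgHom_nmk {A : Type*} [Semiring A] [Algebra k A] (φ : FreeAlgebra k (SGen Q s) →ₐ[k] A)
    (hφ : ∀ ⦃x y⦄, NsRel k Q s x y → φ x = φ y) (r : FreeAlgebra k (SGen Q s)) :
    liftAlgHom φ hφ (nmk k Q s r) = φ r :=
  RingQuot.liftAlgHom_mkAlgHom_apply k φ hφ r

-- The body of this instance is not in constructor form, and unfolding it during instance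
-- unification blocks `mul_smul`, `Finset.mul_sum`, ...
attribute [local irreducible] instRingNsQ

lemma eV_of_lt {i : Q.V} {t : ℕ} (h : t < s) :
    eV k Q s i t = nmk k Q s (FreeAlgebra.ι k (SGen.idem i ⟨t, h⟩)) :=
  dif_pos h

lemma bV_of_lt {i : Q.V} {t : ℕ} (h : t + 1 < s) :
    bV k Q s i t = nmk k Q s (FreeAlgebra.ι k (SGen.vert i t h)) :=
  dif_pos h

lemma aV_of_lt {a : Q.E} {t : ℕ} (h : t + 1 < s) :
    aV k Q s a t = nmk k Q s (FreeAlgebra.ι k (SGen.diag a t h)) :=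
  dif_pos h

lemma eV_mul_eV (i j : Q.V) (t u : ℕ) :
    eV k Q s i t * eV k Q s j u = if i = j ∧ t = u then eV k Q s i t else 0 := by
  by_cases ht : t < s
  · by_cases hu : u < s
    · have h := nmk_eq_of_rel (NsRel.idem_mul (k := k) i j ⟨t, ht⟩ ⟨u, hu⟩)
      rw [map_mul, ← eV_of_lt, ← eV_of_lt] at h
      rw [h, apply_ite (nmk k Q s), map_zero, ← eV_of_lt]
      simp only [Fin.mk.injEq]
    · have hne : ¬(i = j ∧ t = u) := fun h => hu (h.2 ▸ ht)
      simp [eV, hu, hne]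
  · simp [eV, ht]

lemma eV_mul_self (i : Q.V) (t : ℕ) : eV k Q s i t * eV k Q s i t = eV k Q s i t := by
  simp [eV_mul_eV]

lemma sum_eV : ∑ p : Q.V × Fin s, eV k Q s p.1 p.2 = 1 := by
  have h := nmk_eq_of_rel (NsRel.one_def (k := k) (Q := Q) (s := s))
  rw [Fintype.sum_prod_type]
  simpa [eV] using h

lemma bV_eq_eV_mul_mul_eV (i : Q.V) (t : ℕ) :
    bV k Q s i t = eV k Q s i (t + 1) * bV k Q s i t * eV k Q s i t := by
  by_cases h : t + 1 < s
  · have hr := nmk_eq_of_rel (NsRel.vert_comp (k := k) i t h)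
    rwa [map_mul, map_mul, ← eV_of_lt, ← eV_of_lt, ← bV_of_lt] at hr
  · simp [bV, h]

lemma aV_eq_eV_mul_mul_eV (a : Q.E) (t : ℕ) :
    aV k Q s a t = eV k Q s (Q.tgt a) t * aV k Q s a t * eV k Q s (Q.src a) (t + 1) := by
  by_cases h : t + 1 < s
  · have hr := nmk_eq_of_rel (NsRel.diag_comp (k := k) a t h)
    rwa [map_mul, map_mul, ← eV_of_lt, ← eV_of_lt, ← aV_of_lt] at hr
  · simp [aV, h]

lemma eV_mul_aV (a : Q.E) (t : ℕ) : eV k Q s (Q.tgt a) t * aV k Q s a t = aV k Q s a t := by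
  rw [aV_eq_eV_mul_mul_eV, ← mul_assoc, ← mul_assoc, eV_mul_self]

lemma aV_mul_eV (a : Q.E) (t : ℕ) :
    aV k Q s a t * eV k Q s (Q.src a) (t + 1) = aV k Q s a t := by
  rw [aV_eq_eV_mul_mul_eV, mul_assoc, eV_mul_self]

lemma aV_succ_mul_bV (a : Q.E) {t : ℕ} (h : t + 2 < s) :
    aV k Q s a (t + 1) * bV k Q s (Q.src a) (t + 1) =
      bV k Q s (Q.tgt a) t * aV k Q s a t := by
  have hr := nmk_eq_of_rel (NsRel.mesh (k := k) a t h)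
  rwa [map_mul, map_mul, ← aV_of_lt, ← aV_of_lt, ← bV_of_lt, ← bV_of_lt] at hr

lemma aV_zero_mul_bV (a : Q.E) : aV k Q s a 0 * bV k Q s (Q.src a) 0 = 0 := by
  by_cases h : 0 + 1 < s
  · have hr := nmk_eq_of_rel (NsRel.mesh0 (k := k) a h)
    rwa [map_mul, map_zero, ← aV_of_lt, ← bV_of_lt] at hr
  · simp [aV, h]

variable (k Q s) in
/-- The sum of all vertical arrows. It acts on each layer as the vertical arrows out of that layer,
so powers of this single element encode all vertical paths. -/
def bSum : NsQ k Q s := ∑ p : Q.V × Fin s, bV k Q s p.1 p.2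

lemma bSum_mul_eV (i : Q.V) (t : ℕ) : bSum k Q s * eV k Q s i t = bV k Q s i t := by
  by_cases ht : t < s
  · rw [bSum, Finset.sum_mul, Finset.sum_eq_single (i, ⟨t, ht⟩)]
    · rw [bV_eq_eV_mul_mul_eV, mul_assoc, eV_mul_self]
    · rintro ⟨j, u⟩ - hne
      rw [bV_eq_eV_mul_mul_eV, mul_assoc, eV_mul_eV, if_neg (by simpa [Fin.ext_iff] using hne),
        mul_zero]
    · simp
  · simp [eV, bV, ht, show ¬t + 1 < s by lia]

lemma eV_succ_mul_bSum (i : Q.V) (t : ℕ) :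
    eV k Q s i (t + 1) * bSum k Q s = bV k Q s i t := by
  by_cases ht : t + 1 < s
  · rw [bSum, Finset.mul_sum, Finset.sum_eq_single (i, ⟨t, by lia⟩)]
    · rw [bV_eq_eV_mul_mul_eV, ← mul_assoc, ← mul_assoc, eV_mul_self]
    · rintro ⟨j, u⟩ - hne
      rw [bV_eq_eV_mul_mul_eV, ← mul_assoc, ← mul_assoc, eV_mul_eV,
        if_neg (by simpa [Fin.ext_iff, eq_comm] using hne), zero_mul, zero_mul]
    · simp
  · simp [eV, bV, ht]

lemma eV_zero_mul_bSum (i : Q.V) : eV k Q s i 0 * bSum k Q s = 0 := by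
  rw [bSum, Finset.mul_sum]
  refine Finset.sum_eq_zero fun p _ => ?_
  rw [bV_eq_eV_mul_mul_eV, ← mul_assoc, ← mul_assoc, eV_mul_eV, if_neg (by simp), zero_mul,
    zero_mul]

lemma eV_add_mul_bSum_pow (i : Q.V) (t m : ℕ) :
    eV k Q s i (t + m) * bSum k Q s ^ m = bSum k Q s ^ m * eV k Q s i t := by
  induction m with
  | zero => simp
  | succ m ih =>
    rw [pow_succ', ← mul_assoc, ← add_assoc, eV_succ_mul_bSum, ← bSum_mul_eV, mul_assoc, ih,
      mul_assoc]

lemma bSum_mul_Etop : bSum k Q s * Etop k Q s = 0 := by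
  simp [Etop, Elayer, Finset.mul_sum, bSum_mul_eV, bV, show ¬s - 1 + 1 < s by lia]

lemma aV_zero_mul_bSum (a : Q.E) : aV k Q s a 0 * bSum k Q s = 0 := by
  rw [← aV_mul_eV, mul_assoc, eV_succ_mul_bSum, aV_zero_mul_bV]

lemma aV_succ_mul_bSum (a : Q.E) {t : ℕ} (h : t + 2 < s) :
    aV k Q s a (t + 1) * bSum k Q s = bSum k Q s * aV k Q s a t := by
  rw [← aV_mul_eV, mul_assoc, eV_succ_mul_bSum, aV_succ_mul_bV a h, ← bSum_mul_eV, mul_assoc,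
    eV_mul_aV]

lemma exists_aV_mul_bSum_eq (a : Q.E) (t : ℕ) :
    ∃ c, aV k Q s a t * bSum k Q s = bSum k Q s * c := by
  rcases t with - | t
  · exact ⟨0, by rw [aV_zero_mul_bSum, mul_zero]⟩
  · by_cases h : t + 2 < s
    · exact ⟨_, aV_succ_mul_bSum a h⟩
    · exact ⟨0, by simp [aV, h]⟩

lemma aV_add_mul_bSum_pow (a : Q.E) {t m : ℕ} (h : t + m + 1 < s) :
    aV k Q s a (t + m) * bSum k Q s ^ m = bSum k Q s ^ m * aV k Q s a t := by
  induction m with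
  | zero => simp
  | succ m ih =>
    rw [pow_succ', ← mul_assoc, ← add_assoc, aV_succ_mul_bSum a (by lia), mul_assoc,
      ih (by lia), mul_assoc]

lemma aV_mul_bSum_pow_succ (a : Q.E) {t : ℕ} (h : t + 1 < s) :
    aV k Q s a t * bSum k Q s ^ (t + 1) = 0 := by
  have ht := aV_add_mul_bSum_pow (k := k) a (t := 0) (m := t) (zero_add t ▸ h)
  rw [zero_add] at ht
  rw [pow_succ, ← mul_assoc, ht, mul_assoc, aV_zero_mul_bSum, mul_zero]

section TorsionFree

variable {X Y : Type*} [AddCommGroup X] [Module (NsQ k Q s) X]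
  [AddCommGroup Y] [Module (NsQ k Q s) Y]

lemma sum_eV_smul (x : X) : ∑ p : Q.V × Fin s, eV k Q s p.1 p.2 • x = x := by
  rw [← Finset.sum_smul, sum_eV, one_smul]

lemma eq_zero_of_eV_smul_mem_range_bSum
    (h : ∀ (i : Q.V) (t : ℕ) (x : X), ∃ y : X, eV k Q s i t • x = bSum k Q s • y) (x : X) :
    x = 0 := by
  have hzero (t : ℕ) (i : Q.V) (x : X) : eV k Q s i t • x = 0 := by
    induction t generalizing x with
    | zero =>
      obtain ⟨y, hy⟩ := h i 0 x
      rw [← eV_mul_self, mul_smul, hy, ← mul_smul, eV_zero_mul_bSum, zero_smul]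
    | succ t ih =>
      obtain ⟨y, hy⟩ := h i (t + 1) x
      rw [← eV_mul_self, mul_smul, hy, ← mul_smul, eV_succ_mul_bSum, ← bSum_mul_eV, mul_smul, ih,
        smul_zero]
  rw [← sum_eV_smul (k := k) (Q := Q) (s := s) x]
  exact Finset.sum_eq_zero fun p _ => hzero p.2 p.1 x

variable (k Q s X) in
/-- A module is torsion-free if every vertical arrow acts injectively on it. -/
def IsTorsionFree : Prop :=
  ∀ (i : Q.V) (t : ℕ), t + 1 < s → ∀ x : X, bV k Q s i t • x = 0 → eV k Q s i t • x = 0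

lemma IsTorsionFree.of_injective (hX : IsTorsionFree k Q s X) (φ : Y →ₗ[NsQ k Q s] X)
    (hφ : Injective φ) : IsTorsionFree k Q s Y := fun i t ht y hy => by
  refine hφ ?_
  rw [map_zero, map_smul]
  exact hX i t ht _ (by rw [← map_smul, hy, map_zero])

lemma IsTorsionFree.Etop_smul_eq_self (hX : IsTorsionFree k Q s X) {x : X}
    (hx : bSum k Q s • x = 0) : Etop k Q s • x = x := by
  rcases s with - | n
  · have h := sum_eV_smul (k := k) (Q := Q) (s := 0) x
    simp only [Finset.univ_eq_empty, Finset.sum_empty] at h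
    rw [← h, smul_zero]
  have hlow (t : Fin n) (i : Q.V) : eV k Q (n + 1) i t • x = 0 := by
    refine hX i t (by lia) x ?_
    rw [← eV_succ_mul_bSum, mul_smul, hx, smul_zero]
  have h := sum_eV_smul (k := k) (Q := Q) (s := n + 1) x
  rw [Fintype.sum_prod_type_right, Fin.sum_univ_castSucc] at h
  simpa [hlow, Etop, Elayer, Finset.sum_smul] using h

lemma IsTorsionFree.exists_bSum_smul_eq (hX : IsTorsionFree k Q s X) (φ : Y →ₗ[NsQ k Q s] X)
    {y : Y} (hy : φ (bSum k Q s • y) = 0) :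
    ∃ y', φ y' = 0 ∧ bSum k Q s • y' = bSum k Q s • y := by
  refine ⟨y - Etop k Q s • y, ?_, ?_⟩
  · rw [map_sub, map_smul, hX.Etop_smul_eq_self (by rw [← map_smul, hy]), sub_self]
  · rw [smul_sub, ← mul_smul, bSum_mul_Etop, zero_smul, sub_zero]

variable (k Q s X) in
/-- The diagonal arrows into a layer act independently modulo the image of the vertical arrows. -/
def DiagonalsIndependent : Prop :=
  ∀ (t : ℕ) (x : Q.E → X) (y : X), ∑ a, aV k Q s a t • x a = bSum k Q s • y →
    ∀ a, ∃ z, eV k Q s (Q.src a) (t + 1) • x a = bSum k Q s • z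

lemma DiagonalsIndependent.ker (hY : DiagonalsIndependent k Q s Y) (hX : IsTorsionFree k Q s X)
    (φ : Y →ₗ[NsQ k Q s] X) : DiagonalsIndependent k Q s (LinearMap.ker φ) := by
  intro t x y hxy a
  obtain ⟨z, hz⟩ := hY t (fun a => x a) y
    (by simpa using congrArg (LinearMap.ker φ).subtype hxy) a
  obtain ⟨z', hz', hzz'⟩ := hX.exists_bSum_smul_eq φ (y := z)
    (by rw [← hz, map_smul, (x a).2, smul_zero])
  exact ⟨⟨z', hz'⟩, Subtype.ext (hz.trans hzz'.symm)⟩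

end TorsionFree

section Incoming

variable {X : Type*} [AddCommGroup X] [Module k X] [Module (NsQ k Q s) X]
  [IsScalarTower k (NsQ k Q s) X]

variable (k Q s X) in
/-- The sum of the actions of all arrows ending in layer `t`, where the first component carries the
vertical arrows. Its range within layer `t` is the radical of the module in that layer. -/
def incoming (t : ℕ) : X × (Q.E → X) →ₗ[k] X :=
  (Algebra.lsmul k k X (bSum k Q s)).coprod
    (∑ a, Algebra.lsmul k k X (aV k Q s a t) ∘ₗ LinearMap.proj a)

@[simp]
lemma incoming_apply (t : ℕ) (y : X) (x : Q.E → X) :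
    incoming k Q s X t (y, x) = bSum k Q s • y + ∑ a, aV k Q s a t • x a := by
  simp [incoming]

variable (k Q s X) in
/-- The projection of a module to its top (the quotient by its radical) at the vertex `p` of the
staircase quiver. -/
def toTop (p : Q.V × Fin s) : X →ₗ[k] X ⧸ LinearMap.range (incoming k Q s X p.2) :=
  Submodule.mkQ _ ∘ₗ Algebra.lsmul k k X (eV k Q s p.1 p.2)

lemma bSum_smul_mem_range_incoming (t : ℕ) (x : X) :
    bSum k Q s • x ∈ LinearMap.range (incoming k Q s X t) :=
  ⟨(x, 0), by simp⟩

lemma aV_smul_mem_range_incoming (a : Q.E) (t : ℕ) (x : X) :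
    aV k Q s a t • x ∈ LinearMap.range (incoming k Q s X t) := by
  classical
  exact ⟨(0, Pi.single a x), by simp [Pi.single_apply]⟩

lemma eV_smul_mem_range_bSum
    (h : ∀ (p : Q.V × Fin s) (x : X),
      eV k Q s p.1 p.2 • x ∈ LinearMap.range (incoming k Q s X p.2)) (i : Q.V) (t : ℕ) (x : X) :
    ∃ y : X, eV k Q s i t • x = bSum k Q s • y := by
  induction hd : s - t generalizing i t x with
  | zero => exact ⟨0, by simp [eV, show ¬t < s by lia]⟩
  | succ d ih =>
    obtain ⟨⟨y, z⟩, hyz⟩ := h (i, ⟨t, by lia⟩) x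
    choose w hw using fun a => ih (Q.src a) (t + 1) (z a) (by lia)
    choose c hc using fun a => exists_aV_mul_bSum_eq (k := k) (s := s) (a := a) t
    have hz (a : Q.E) : aV k Q s a t • z a = bSum k Q s • c a • w a := by
      rw [← aV_mul_eV, mul_smul, hw, ← mul_smul, hc, mul_smul]
    refine ⟨y + ∑ a, c a • w a, ?_⟩
    rw [← hyz, incoming_apply, smul_add, Finset.smul_sum, Finset.sum_congr rfl fun a _ => hz a]

/-- Nakayama's lemma for the (nilpotent) ideal generated by the arrows. -/
lemma eq_zero_of_eV_smul_mem_range_incoming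
    (h : ∀ (p : Q.V × Fin s) (x : X),
      eV k Q s p.1 p.2 • x ∈ LinearMap.range (incoming k Q s X p.2)) (x : X) : x = 0 :=
  eq_zero_of_eV_smul_mem_range_bSum (eV_smul_mem_range_bSum h) x

variable {Y : Type*} [AddCommGroup Y] [Module (NsQ k Q s) Y]

lemma DiagonalsIndependent.mem_range_incoming_ker (hD : DiagonalsIndependent k Q s Y)
    (hY : IsTorsionFree k Q s Y) {φ : X →ₗ[NsQ k Q s] Y} (hφ : Surjective φ) {t : ℕ}
    {g : LinearMap.ker φ} (hg : (g : X) ∈ LinearMap.range (incoming k Q s X t)) :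
    g ∈ LinearMap.range (incoming k Q s (LinearMap.ker φ) t) := by
  obtain ⟨⟨y, x⟩, hyx⟩ := hg
  have hsum : ∑ a, aV k Q s a t • φ (x a) = bSum k Q s • -φ y := by
    rw [smul_neg, eq_neg_iff_add_eq_zero, add_comm]
    simpa using congrArg φ hyx
  choose z hz using hD t _ _ hsum
  choose w hw using fun a => hφ (z a)
  choose c hc using fun a => exists_aV_mul_bSum_eq (k := k) (s := s) (a := a) t
  let x' (a : Q.E) : LinearMap.ker φ :=
    ⟨eV k Q s (Q.src a) (t + 1) • x a - bSum k Q s • w a, by simp [hz, hw]⟩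
  have hx (a : Q.E) : aV k Q s a t • x a = aV k Q s a t • (x' a : X) + bSum k Q s • c a • w a := by
    rw [smul_sub, ← mul_smul, ← mul_smul, aV_mul_eV, hc, mul_smul, sub_add_cancel]
  have hg : (g : X) = bSum k Q s • (y + ∑ a, c a • w a) + ∑ a, aV k Q s a t • (x' a : X) := by
    rw [← hyx, incoming_apply, Finset.sum_congr rfl fun a _ => hx a, Finset.sum_add_distrib,
      smul_add, Finset.smul_sum]
    abel
  obtain ⟨y', hy', hby'⟩ := hY.exists_bSum_smul_eq φ (y := y + ∑ a, c a • w a) <| by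
    rw [← add_sub_cancel_right (bSum k Q s • _) (∑ a, aV k Q s a t • (x' a : X)), ← hg, map_sub,
      map_sum, g.2, zero_sub, neg_eq_zero]
    exact Finset.sum_eq_zero fun a _ => by rw [map_smul, (x' a).2, smul_zero]
  refine ⟨(⟨y', hy'⟩, x'), Subtype.ext ?_⟩
  simp [hg, hby']

variable [Module k Y] [IsScalarTower k (NsQ k Q s) Y]

lemma map_mem_range_incoming (φ : X →ₗ[NsQ k Q s] Y) {t : ℕ} {x : X}
    (hx : x ∈ LinearMap.range (incoming k Q s X t)) :
    φ x ∈ LinearMap.range (incoming k Q s Y t) := by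
  obtain ⟨⟨y, z⟩, rfl⟩ := hx
  exact ⟨(φ y, φ ∘ z), by simp⟩

end Incoming

section OfGenerators

variable {X Y : Type*} [AddCommGroup X] [Module k X] [Module (NsQ k Q s) X]
  [IsScalarTower k (NsQ k Q s) X] [AddCommGroup Y] [Module k Y] [Module (NsQ k Q s) Y]
  [IsScalarTower k (NsQ k Q s) Y]

/-- A `k`-linear map commuting with the generators of `N_s(Q)`, as an `N_s(Q)`-linear map. -/
def linearMapOfGenerators (φ : X →ₗ[k] Y)
    (hφ : ∀ (g : SGen Q s) (x : X),
      φ (nmk k Q s (FreeAlgebra.ι k g) • x) = nmk k Q s (FreeAlgebra.ι k g) • φ x) :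
    X →ₗ[NsQ k Q s] Y where
  toFun := φ
  map_add' := map_add φ
  map_smul' r x := by
    obtain ⟨r, rfl⟩ := nmk_surjective r
    simp only [RingHom.id_apply]
    induction r using FreeAlgebra.induction generalizing x with
    | grade0 c => rw [AlgHom.commutes, algebraMap_smul, algebraMap_smul, map_smul]
    | grade1 g => exact hφ g x
    | mul a b ha hb => rw [map_mul, mul_smul, mul_smul, ha, hb]
    | add a b ha hb => rw [map_add, add_smul, add_smul, map_add, ha, hb]

end OfGenerators

section Words

variable (B : Q.V × Fin s → Type*)

/-- Formal compositions of diagonal arrows applied to a generator in `B`. -/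
inductive DiagWord
  | gen (p : Q.V × Fin s) (x : B p)
  | cons (a : Q.E) (w : DiagWord)

namespace DiagWord

variable {B}

/-- The vertex of `Q` at which a word ends. -/
def vertex : DiagWord B → Q.V
  | gen p _ => p.1
  | cons a _ => Q.tgt a

/-- The layer in which a word ends. -/
def layer : DiagWord B → ℕ
  | gen p _ => p.2
  | cons _ w => w.layer - 1

/-- The condition that consecutive letters are composable in the staircase quiver. -/
def IsPath : DiagWord B → Prop
  | gen _ _ => True
  | cons a w => w.IsPath ∧ w.vertex = Q.src a ∧ 0 < w.layer

lemma layer_lt : ∀ w : DiagWord B, w.layer < s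
  | gen p _ => p.2.2
  | cons _ w => (Nat.sub_le _ _).trans_lt w.layer_lt

end DiagWord

/-- A composable word of diagonal arrows followed by `height` vertical arrows. By the mesh relations
these form a basis of the module freely generated by `B`. -/
@[ext]
structure NormalWord where
  path : DiagWord B
  height : ℕ
  isPath : path.IsPath
  lt : path.layer + height < s

namespace NormalWord

variable {B}

/-- The vertex of `Q` at which a normal word ends. -/
def vertex (w : NormalWord B) : Q.V := w.path.vertex

/-- The layer in which a normal word ends. -/
def layer (w : NormalWord B) : ℕ := w.path.layer + w.height

/-- The composition of a vertical arrow with a normal word. -/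
@[simps]
def raise (w : NormalWord B) (h : w.layer + 1 < s) : NormalWord B :=
  ⟨w.path, w.height + 1, w.isPath, h⟩

/-- The composition of a diagonal arrow with a normal word; by the mesh relations the arrow moves
past the vertical part of the word. -/
@[simps]
def cons (a : Q.E) (w : NormalWord B) (hv : w.vertex = Q.src a) (hl : 0 < w.path.layer) :
    NormalWord B :=
  ⟨.cons a w.path, w.height, ⟨w.isPath, hv, hl⟩, by have := w.lt; simp only [DiagWord.layer]; lia⟩

@[simp]
lemma vertex_raise (w : NormalWord B) (h : w.layer + 1 < s) : (w.raise h).vertex = w.vertex := rfl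

@[simp]
lemma layer_raise (w : NormalWord B) (h : w.layer + 1 < s) : (w.raise h).layer = w.layer + 1 := rfl

@[simp]
lemma vertex_cons (a : Q.E) (w : NormalWord B) (hv hl) : (w.cons a hv hl).vertex = Q.tgt a := rfl

@[simp]
lemma layer_cons (a : Q.E) (w : NormalWord B) (hv hl) : (w.cons a hv hl).layer = w.layer - 1 := by
  simp only [layer, cons, DiagWord.layer]
  lia

lemma cons_raise (a : Q.E) (w : NormalWord B) (h : w.layer + 1 < s)
    (hv : (w.raise h).vertex = Q.src a) (hl : 0 < (w.raise h).path.layer) :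
    (w.raise h).cons a hv hl = (w.cons a hv hl).raise (by have := layer_cons a w hv hl; lia) :=
  rfl

/-- The composition of a generator of `N_s(Q)` with a normal word, where `none` stands for zero. -/
def step (w : NormalWord B) : SGen Q s → Option (NormalWord B)
  | .idem i t => if w.vertex = i ∧ w.layer = t then some w else none
  | .vert i t h =>
    if hw : w.vertex = i ∧ w.layer = t then some (w.raise (by rwa [hw.2])) else none
  | .diag a t _ =>
    if hw : (w.vertex = Q.src a ∧ w.layer = t + 1) ∧ 0 < w.path.layer then
      some (w.cons a hw.1.1 hw.2) else none

end NormalWord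

variable (k) in
/-- The `N_s(Q)`-module freely generated by elements `x : B (i, t)` subject only to `e(i_t) x = x`,
constructed on its basis of normal words. -/
def FreeOn : Type _ := NormalWord B →₀ k

namespace FreeOn

instance : AddCommGroup (FreeOn k B) := inferInstanceAs (AddCommGroup (NormalWord B →₀ k))

instance : Module k (FreeOn k B) := inferInstanceAs (Module k (NormalWord B →₀ k))

variable {B}

variable (k) in
/-- The basis of normal words of the free module. -/
def basis : Module.Basis (NormalWord B) k (FreeOn k B) := ⟨LinearEquiv.refl k _⟩

variable (k) in
/-- The action of a generator of `N_s(Q)` on the free module, by composition with normal words. -/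
def genAct (g : SGen Q s) : FreeOn k B →ₗ[k] FreeOn k B :=
  (basis k).constr k fun w => (w.step g).elim 0 (basis k)

lemma genAct_basis (g : SGen Q s) (w : NormalWord B) :
    genAct k g (basis k w) = (w.step g).elim 0 (basis k) := by
  simp [genAct]

lemma sum_genAct_idem (x : FreeOn k B) : ∑ i, ∑ t, genAct k (.idem i t) x = x := by
  have h : ∑ i, ∑ t, genAct (B := B) k (.idem i t) = LinearMap.id := (basis k).ext fun w => by
    have hw (t : Fin s) : w.layer = t ↔ ⟨w.layer, w.lt⟩ = t := by rw [Fin.ext_iff]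
    simp [genAct_basis, NormalWord.step, hw, ite_and, apply_ite (Option.elim · 0 (basis k))]
  simpa using LinearMap.congr_fun h x

lemma lift_genAct_eq_of_rel {x y : FreeAlgebra k (SGen Q s)} (h : NsRel k Q s x y) :
    FreeAlgebra.lift k (genAct (B := B) k) x = FreeAlgebra.lift k (genAct k) y := by
  refine (basis k).ext fun w => ?_
  cases h with
  | idem_mul i j t u =>
    by_cases hij : i = j ∧ t = u
    · obtain ⟨rfl, rfl⟩ := hij
      by_cases hw : w.vertex = i ∧ w.layer = t <;> simp [genAct_basis, NormalWord.step, hw]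
    · by_cases hw : w.vertex = j ∧ w.layer = u
      · have hij' : ¬(j = i ∧ (u : ℕ) = t) := by rwa [Fin.val_inj, eq_comm, eq_comm (a := u)]
        simp [genAct_basis, NormalWord.step, hw, hij, hij']
      · simp [genAct_basis, NormalWord.step, hw, hij]
  | one_def => simp [sum_genAct_idem]
  | vert_comp i t h =>
    by_cases hw : w.vertex = i ∧ w.layer = t <;>
      simp [genAct_basis, NormalWord.step, hw]
  | diag_comp a t h =>
    by_cases hw : w.vertex = Q.src a ∧ w.layer = t + 1 <;> by_cases hl : 0 < w.path.layer <;>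
      simp [genAct_basis, NormalWord.step, hw, hl]
  | mesh a t h =>
    by_cases hw : w.vertex = Q.src a ∧ w.layer = t + 1 <;> by_cases hl : 0 < w.path.layer <;>
      simp [genAct_basis, NormalWord.step, NormalWord.cons_raise, hw, hl]
  | mesh0 a h =>
    by_cases hw : w.vertex = Q.src a ∧ w.layer = 0
    · have hl : w.path.layer = 0 := (Nat.add_eq_zero_iff.1 hw.2).1
      simp [genAct_basis, NormalWord.step, hw, hl]
    · simp [genAct_basis, NormalWord.step, hw]

variable (k B) in
/-- The action of `N_s(Q)` on the free module. -/
def action : NsQ k Q s →ₐ[k] Module.End k (FreeOn k B) :=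
  liftAlgHom (FreeAlgebra.lift k (genAct k)) fun _ _ => lift_genAct_eq_of_rel

instance : Module (NsQ k Q s) (FreeOn k B) :=
  Module.compHom _ (action k B).toRingHom

lemma nmk_ι_smul (g : SGen Q s) (x : FreeOn k B) :
    nmk k Q s (FreeAlgebra.ι k g) • x = genAct k g x := by
  change action k B _ x = _
  rw [action, liftAlgHom_nmk, FreeAlgebra.lift_ι_apply]

instance : IsScalarTower k (NsQ k Q s) (FreeOn k B) where
  smul_assoc c r x := LinearMap.congr_fun (map_smul (action k B) c r) x

lemma eV_smul {i : Q.V} {t : ℕ} (h : t < s) (x : FreeOn k B) :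
    eV k Q s i t • x = genAct k (.idem i ⟨t, h⟩) x := by
  rw [eV_of_lt h, nmk_ι_smul]

lemma bV_smul {i : Q.V} {t : ℕ} (h : t + 1 < s) (x : FreeOn k B) :
    bV k Q s i t • x = genAct k (.vert i t h) x := by
  rw [bV_of_lt h, nmk_ι_smul]

lemma aV_smul {a : Q.E} {t : ℕ} (h : t + 1 < s) (x : FreeOn k B) :
    aV k Q s a t • x = genAct k (.diag a t h) x := by
  rw [aV_of_lt h, nmk_ι_smul]

lemma eV_smul_basis (i : Q.V) (t : ℕ) (w : NormalWord B) :
    eV k Q s i t • basis k w = if w.vertex = i ∧ w.layer = t then basis k w else 0 := by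
  by_cases h : t < s
  · rw [eV_smul h, genAct_basis, NormalWord.step]
    split_ifs <;> rfl
  · have hw : w.layer < s := w.lt
    rw [if_neg (by lia), eV, dif_neg h, zero_smul]

lemma bSum_smul_basis (w : NormalWord B) :
    bSum k Q s • basis k w = if h : w.layer + 1 < s then basis k (w.raise h) else 0 := by
  have hw : basis k w = eV k Q s w.vertex w.layer • basis k w := by simp [eV_smul_basis]
  rw [hw, ← mul_smul, bSum_mul_eV]
  split_ifs with h
  · rw [bV_smul h, genAct_basis]
    simp [NormalWord.step]
  · rw [bV, dif_neg h, zero_smul]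

lemma aV_smul_basis (a : Q.E) (t : ℕ) (w : NormalWord B) :
    aV k Q s a t • basis k w =
      if h : (w.vertex = Q.src a ∧ w.layer = t + 1) ∧ 0 < w.path.layer then
        basis k (w.cons a h.1.1 h.2) else 0 := by
  by_cases ht : t + 1 < s
  · rw [aV_smul ht, genAct_basis, NormalWord.step]
    split_ifs <;> rfl
  · have hw : w.layer < s := w.lt
    rw [dif_neg (by lia), aV, dif_neg ht, zero_smul]

lemma basis_raise (w : NormalWord B) (h : w.layer + 1 < s) :
    basis k (w.raise h) = bSum k Q s • basis k w := by
  rw [bSum_smul_basis, dif_pos h]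

lemma basis_cons (a : Q.E) (w : NormalWord B) (hv : w.vertex = Q.src a) (hl : 0 < w.path.layer) :
    basis k (w.cons a hv hl) = aV k Q s a (w.layer - 1) • basis k w := by
  have hlayer : w.layer = w.layer - 1 + 1 := by
    simp only [NormalWord.layer]
    lia
  rw [aV_smul_basis, dif_pos ⟨⟨hv, hlayer⟩, hl⟩]

variable (k B) in
/-- The projection onto the span of the normal words without vertical arrows. -/
def flat : FreeOn k B →ₗ[k] FreeOn k B :=
  (basis k).constr k fun w => if w.height = 0 then basis k w else 0

variable (k B) in
/-- The map removing one vertical arrow from a normal word. -/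
def lower : FreeOn k B →ₗ[k] FreeOn k B :=
  (basis k).constr k fun
    | ⟨_, 0, _, _⟩ => 0
    | ⟨q, m + 1, hq, h⟩ => basis k ⟨q, m, hq, by lia⟩

open Classical in
variable (k B) in
/-- The map removing a final arrow `a` from a normal word without vertical arrows. -/
def uncons (a : Q.E) : FreeOn k B →ₗ[k] FreeOn k B :=
  (basis k).constr k fun
    | ⟨.cons a' q, 0, hq, _⟩ => if a' = a then basis k ⟨q, 0, hq.1, q.layer_lt⟩ else 0
    | _ => 0

lemma flat_basis (w : NormalWord B) :
    flat k B (basis k w) = if w.height = 0 then basis k w else 0 := by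
  simp [flat]

lemma lower_basis_raise (w : NormalWord B) (h : w.layer + 1 < s) :
    lower k B (basis k (w.raise h)) = basis k w := by
  simp [lower, NormalWord.raise]

lemma lower_bV_smul {i : Q.V} {t : ℕ} (ht : t + 1 < s) (x : FreeOn k B) :
    lower k B (bV k Q s i t • x) = eV k Q s i t • x := by
  have h : lower k B ∘ₗ Algebra.lsmul k k _ (bV k Q s i t) =
      Algebra.lsmul k k _ (eV k Q s i t) := (basis k).ext fun w => by
    simp only [LinearMap.comp_apply, Algebra.lsmul_coe]
    rw [← bSum_mul_eV, mul_smul, eV_smul_basis]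
    split_ifs with hw
    · rw [bSum_smul_basis, dif_pos (by lia), lower_basis_raise]
    · simp
  exact LinearMap.congr_fun h x

lemma flat_add_bSum_smul_lower (x : FreeOn k B) : flat k B x + bSum k Q s • lower k B x = x := by
  have h : flat k B + Algebra.lsmul k k _ (bSum k Q s) ∘ₗ lower k B = LinearMap.id :=
    (basis k).ext fun w => by
      rw [LinearMap.add_apply, LinearMap.comp_apply, Algebra.lsmul_coe, LinearMap.id_apply]
      rcases w with ⟨q, _ | m, hq, h⟩
      · simp [flat_basis, lower]
      · have hm : q.layer + m + 1 < s := h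
        simp [flat_basis, lower, bSum_smul_basis, NormalWord.layer, NormalWord.raise, hm]
  exact LinearMap.congr_fun h x

lemma uncons_bSum_smul (a : Q.E) (x : FreeOn k B) : uncons k B a (bSum k Q s • x) = 0 := by
  have h : uncons k B a ∘ₗ Algebra.lsmul k k _ (bSum k Q s) = 0 := (basis k).ext fun w => by
    simp only [LinearMap.comp_apply, Algebra.lsmul_coe, bSum_smul_basis]
    rcases w with ⟨_ | _, _, _, _⟩ <;> split_ifs <;> simp [uncons, NormalWord.raise]
  exact LinearMap.congr_fun h x

open Classical in
lemma uncons_basis_cons (a a' : Q.E) (w : NormalWord B) (hv hl) :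
    uncons k B a (basis k (w.cons a' hv hl)) = if a' = a then flat k B (basis k w) else 0 := by
  rw [uncons, Module.Basis.constr_basis, flat_basis]
  rcases w with ⟨q, _ | m, hq, h⟩
  · rfl
  · exact (ite_self 0).symm

lemma uncons_aV_smul_self (a : Q.E) (t : ℕ) (x : FreeOn k B) :
    uncons k B a (aV k Q s a t • x) = flat k B (eV k Q s (Q.src a) (t + 1) • x) := by
  have h : uncons k B a ∘ₗ Algebra.lsmul k k _ (aV k Q s a t) =
      flat k B ∘ₗ Algebra.lsmul k k _ (eV k Q s (Q.src a) (t + 1)) := (basis k).ext fun w => by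
    simp only [LinearMap.comp_apply, Algebra.lsmul_coe, aV_smul_basis, eV_smul_basis]
    by_cases hw : w.vertex = Q.src a ∧ w.layer = t + 1
    · by_cases hl : 0 < w.path.layer
      · rw [dif_pos ⟨hw, hl⟩, if_pos hw, uncons_basis_cons, if_pos rfl]
      · have hheight : w.height ≠ 0 := fun h0 => by
          simp only [NormalWord.layer] at hw
          lia
        rw [dif_neg (by simp [hl]), if_pos hw, flat_basis, if_neg hheight, map_zero]
    · rw [dif_neg (by simp [hw]), if_neg hw, map_zero, map_zero]
  exact LinearMap.congr_fun h x

lemma uncons_aV_smul_of_ne {a a' : Q.E} (ha : a' ≠ a) (t : ℕ) (x : FreeOn k B) :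
    uncons k B a (aV k Q s a' t • x) = 0 := by
  have h : uncons k B a ∘ₗ Algebra.lsmul k k _ (aV k Q s a' t) = 0 := (basis k).ext fun w => by
    simp only [LinearMap.comp_apply, Algebra.lsmul_coe, aV_smul_basis]
    split_ifs <;> simp [uncons_basis_cons, ha]
  exact LinearMap.congr_fun h x

lemma isTorsionFree : IsTorsionFree k Q s (FreeOn k B) := fun i t ht x hx => by
  rw [← lower_bV_smul ht, hx, map_zero]

lemma diagonalsIndependent : DiagonalsIndependent k Q s (FreeOn k B) := by
  intro t x y hxy a
  have hflat : flat k B (eV k Q s (Q.src a) (t + 1) • x a) = 0 := by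
    rw [← uncons_aV_smul_self, ← uncons_bSum_smul a y, ← hxy, map_sum,
      Finset.sum_eq_single a (fun a' _ ha => uncons_aV_smul_of_ne ha t _) (by simp)]
  refine ⟨lower k B (eV k Q s (Q.src a) (t + 1) • x a), ?_⟩
  rw [← zero_add (bSum k Q s • _), ← hflat, flat_add_bSum_smul_lower]

end FreeOn
end Words

section Lift

variable {B : Q.V × Fin s → Type*} {X Y : Type*} [AddCommGroup X] [Module (NsQ k Q s) X]
  [AddCommGroup Y] [Module (NsQ k Q s) Y]

variable (k) in
/-- The value in `X` of a diagonal word after substituting `f p x` for each generator `x : B p`. -/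
def DiagWord.eval (f : ∀ p, B p → X) : DiagWord B → X
  | gen p x => eV k Q s p.1 p.2 • f p x
  | cons a q => aV k Q s a (q.layer - 1) • q.eval f

lemma DiagWord.eV_smul_eval_self (f : ∀ p, B p → X) (q : DiagWord B) :
    eV k Q s q.vertex q.layer • q.eval k f = q.eval k f := by
  cases q with
  | gen p x => rw [eval, ← mul_smul, vertex, layer, eV_mul_self]
  | cons a q => rw [eval, ← mul_smul, vertex, layer, eV_mul_aV]

lemma DiagWord.map_eval (φ : X →ₗ[NsQ k Q s] Y) (f : ∀ p, B p → X) (q : DiagWord B) :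
    φ (q.eval k f) = q.eval k fun p x => φ (f p x) := by
  induction q with
  | gen p x => rw [eval, eval, map_smul]
  | cons a q ih => rw [eval, eval, map_smul, ih]

namespace NormalWord

variable (k) in
/-- The value in `X` of a normal word after substituting `f p x` for each generator `x : B p`. -/
def eval (f : ∀ p, B p → X) (w : NormalWord B) : X :=
  bSum k Q s ^ w.height • w.path.eval k f

lemma map_eval (φ : X →ₗ[NsQ k Q s] Y) (f : ∀ p, B p → X) (w : NormalWord B) :
    φ (w.eval k f) = w.eval k fun p x => φ (f p x) := by
  rw [eval, eval, map_smul, DiagWord.map_eval]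

lemma eV_smul_eval (f : ∀ p, B p → X) (w : NormalWord B) (i : Q.V) (t : ℕ) :
    eV k Q s i t • w.eval k f = if w.vertex = i ∧ w.layer = t then w.eval k f else 0 := by
  have hself : eV k Q s w.vertex w.layer • w.eval k f = w.eval k f := by
    rw [eval, vertex, layer, ← mul_smul, eV_add_mul_bSum_pow, mul_smul, w.path.eV_smul_eval_self]
  split_ifs with hw
  · rwa [hw.1, hw.2] at hself
  · rw [← hself, ← mul_smul, eV_mul_eV, if_neg (by rwa [eq_comm, eq_comm (a := t)]), zero_smul]

lemma bV_smul_eval (f : ∀ p, B p → X) (w : NormalWord B) {i : Q.V} {t : ℕ} (ht : t + 1 < s) :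
    bV k Q s i t • w.eval k f = if h : w.vertex = i ∧ w.layer = t then
      (w.raise (by rwa [h.2])).eval k f else 0 := by
  rw [← bSum_mul_eV, mul_smul, eV_smul_eval]
  split_ifs with h
  · rw [eval, eval, raise_path, raise_height, pow_succ', mul_smul]
  · rw [smul_zero]

lemma aV_smul_eval (f : ∀ p, B p → X) (w : NormalWord B) {a : Q.E} {t : ℕ} (ht : t + 1 < s) :
    aV k Q s a t • w.eval k f =
      if h : (w.vertex = Q.src a ∧ w.layer = t + 1) ∧ 0 < w.path.layer then
        (w.cons a h.1.1 h.2).eval k f else 0 := by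
  by_cases hw : w.vertex = Q.src a ∧ w.layer = t + 1
  · have hlayer : w.path.layer + w.height = t + 1 := hw.2
    by_cases hl : 0 < w.path.layer
    · obtain rfl : t = w.path.layer - 1 + w.height := by lia
      rw [dif_pos ⟨hw, hl⟩, eval, eval, cons_path, cons_height, DiagWord.eval, ← mul_smul,
        ← mul_smul, aV_add_mul_bSum_pow a ht]
    · rw [dif_neg (by simp [hl]), eval, show w.height = t + 1 by lia, ← mul_smul,
        aV_mul_bSum_pow_succ a ht, zero_smul]
  · rw [dif_neg (by simp [hw]), ← aV_mul_eV, mul_smul, eV_smul_eval, if_neg hw, smul_zero]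

lemma nmk_ι_smul_eval (f : ∀ p, B p → X) (w : NormalWord B) (g : SGen Q s) :
    nmk k Q s (FreeAlgebra.ι k g) • w.eval k f = (w.step g).elim 0 (eval k f) := by
  cases g with
  | idem i t =>
    rw [← eV_of_lt t.2, eV_smul_eval, step]
    split_ifs <;> rfl
  | vert i t h =>
    rw [← bV_of_lt h, bV_smul_eval f w h, step]
    split_ifs <;> rfl
  | diag a t h =>
    rw [← aV_of_lt h, aV_smul_eval f w h, step]
    split_ifs <;> rfl

end NormalWord

namespace FreeOn

/-- The generator of the free module corresponding to `x : B p`. -/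
def of (p : Q.V × Fin s) (x : B p) : FreeOn k B :=
  basis k ⟨.gen p x, 0, trivial, p.2.2⟩

lemma diagWord_eval_of (q : DiagWord B) (hq : q.IsPath) :
    q.eval k of = basis k ⟨q, 0, hq, q.layer_lt⟩ := by
  induction q with
  | gen p x => rw [DiagWord.eval, of, eV_smul_basis, if_pos ⟨rfl, rfl⟩]
  | cons a q ih =>
    rw [DiagWord.eval, ih hq.1]
    exact (basis_cons a ⟨q, 0, hq.1, q.layer_lt⟩ hq.2.1 hq.2.2).symm

lemma eval_of (w : NormalWord B) : w.eval k of = basis k w := by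
  obtain ⟨q, m, hq, h⟩ := w
  rw [NormalWord.eval, diagWord_eval_of q hq]
  induction m with
  | zero => rw [pow_zero, one_smul]
  | succ m ih =>
    rw [pow_succ', mul_smul, ih (Nat.lt_of_succ_lt h)]
    exact (basis_raise ⟨q, m, hq, Nat.lt_of_succ_lt h⟩ h).symm

variable [Module k X] [IsScalarTower k (NsQ k Q s) X]

/-- The linear map out of the free module determined by the images `e(p) • f p x` of the
generators `x : B p`. -/
def lift (f : ∀ p, B p → X) : FreeOn k B →ₗ[NsQ k Q s] X :=
  linearMapOfGenerators ((basis k).constr k (NormalWord.eval k f)) fun g x => by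
    have h : (basis k).constr k (NormalWord.eval k f) ∘ₗ genAct k g =
        Algebra.lsmul k k X (nmk k Q s (FreeAlgebra.ι k g)) ∘ₗ
          (basis k).constr k (NormalWord.eval k f) := (basis k).ext fun w => by
      simp only [LinearMap.comp_apply, Algebra.lsmul_coe, Module.Basis.constr_basis,
        NormalWord.nmk_ι_smul_eval, genAct_basis]
      cases w.step g <;> simp
    rw [nmk_ι_smul]
    exact LinearMap.congr_fun h x

lemma lift_basis (f : ∀ p, B p → X) (w : NormalWord B) : lift f (basis k w) = w.eval k f :=
  (basis k).constr_basis k _ w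

lemma lift_of (f : ∀ p, B p → X) (p : Q.V × Fin s) (x : B p) :
    lift f (of (k := k) p x) = eV k Q s p.1 p.2 • f p x := by
  rw [of, lift_basis, NormalWord.eval, DiagWord.eval, pow_zero, one_smul]

instance : Module.Projective (NsQ k Q s) (FreeOn k B) :=
  .of_lifting_property'' fun φ hφ => by
    choose f hf using fun p (x : B p) => hφ (of p x)
    refine ⟨lift f, LinearMap.restrictScalars_injective k ((basis k).ext fun w => ?_)⟩
    change φ (lift f (basis k w)) = basis k w
    simp only [lift_basis, NormalWord.map_eval, hf, eval_of]

lemma basis_mem_span_sup {p : Q.V × Fin s} {w : NormalWord B} (hi : w.vertex = p.1)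
    (ht : w.layer = p.2) :
    basis k w ∈
      Submodule.span k (Set.range (of p)) ⊔ LinearMap.range (incoming k Q s (FreeOn k B) p.2) := by
  obtain ⟨i, t⟩ := p
  obtain ⟨q, _ | m, hq, h⟩ := w
  · cases q with
    | gen p x =>
      obtain rfl : p = (i, t) := Prod.ext hi (Fin.ext ht)
      exact Submodule.mem_sup_left (Submodule.subset_span ⟨x, rfl⟩)
    | cons a q =>
      have hcons : basis k _ = _ := basis_cons a ⟨q, 0, hq.1, q.layer_lt⟩ hq.2.1 hq.2.2
      exact Submodule.mem_sup_right (hcons ▸ ht ▸ aV_smul_mem_range_incoming ..)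
  · have hraise : basis k _ = _ := basis_raise ⟨q, m, hq, Nat.lt_of_succ_lt h⟩ h
    exact Submodule.mem_sup_right (hraise ▸ bSum_smul_mem_range_incoming ..)

lemma eV_smul_mem_span_sup (p : Q.V × Fin s) (g : FreeOn k B) :
    eV k Q s p.1 p.2 • g ∈
      Submodule.span k (Set.range (of p)) ⊔ LinearMap.range (incoming k Q s (FreeOn k B) p.2) := by
  suffices h : ⊤ ≤ (Submodule.span k (Set.range (of p)) ⊔
      LinearMap.range (incoming k Q s (FreeOn k B) p.2)).comap
        (Algebra.lsmul k k _ (eV k Q s p.1 p.2)) from h (Submodule.mem_top (x := g))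
  rw [← (basis k).span_eq, Submodule.span_le]
  rintro _ ⟨w, rfl⟩
  simp only [SetLike.mem_coe, Submodule.mem_comap, Algebra.lsmul_coe, eV_smul_basis]
  split_ifs with hw
  · exact basis_mem_span_sup hw.1 hw.2
  · exact zero_mem _

lemma lift_surjective {f : ∀ p, B p → X}
    (hf : ∀ p x, toTop k Q s X p x ∈ Submodule.span k (Set.range (toTop k Q s X p ∘ f p))) :
    Surjective (lift f : FreeOn k B →ₗ[NsQ k Q s] X) := by
  set φ : FreeOn k B →ₗ[NsQ k Q s] X := lift f
  have hzero : ∀ z : X ⧸ LinearMap.range φ, z = 0 := by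
    refine eq_zero_of_eV_smul_mem_range_incoming (k := k) (Q := Q) (s := s) fun p z => ?_
    obtain ⟨x, rfl⟩ := Submodule.mkQ_surjective _ z
    let T := (LinearMap.range (incoming k Q s (X ⧸ LinearMap.range φ) p.2)).comap
      ((LinearMap.range φ).mkQ.restrictScalars k)
    have hT : LinearMap.range (incoming k Q s X p.2) ≤ T := fun y hy =>
      map_mem_range_incoming (LinearMap.range φ).mkQ hy
    have hfT (b : B p) : eV k Q s p.1 p.2 • f p b ∈ T := by
      have hmk : (LinearMap.range φ).mkQ (eV k Q s p.1 p.2 • f p b) = 0 := by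
        rw [← lift_of, Submodule.mkQ_apply, Submodule.Quotient.mk_eq_zero]
        exact ⟨_, rfl⟩
      exact Submodule.mem_comap.2 (hmk.symm ▸ zero_mem _)
    have hx : eV k Q s p.1 p.2 • x ∈ T := by
      rw [← sup_eq_right.2 hT, ← Submodule.comap_map_mkQ]
      refine Submodule.mem_comap.2 (Submodule.span_le.2 ?_ (hf p x))
      rintro _ ⟨b, rfl⟩
      exact Submodule.mem_map_of_mem (hfT b)
    rw [← map_smul]
    exact hx
  rw [← LinearMap.range_eq_top, ← Submodule.Quotient.subsingleton_iff]
  exact subsingleton_of_forall_eq 0 hzero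

lemma eq_zero_of_lift_mem_range_incoming {f : ∀ p, B p → X} {p : Q.V × Fin s}
    (hf : LinearIndependent k (toTop k Q s X p ∘ f p)) {u : FreeOn k B}
    (hu : u ∈ Submodule.span k (Set.range (of p)))
    (hφ : lift f u ∈ LinearMap.range (incoming k Q s X p.2)) : u = 0 := by
  rw [← Finsupp.range_linearCombination] at hu
  obtain ⟨c, rfl⟩ := hu
  have hc : Finsupp.linearCombination k (toTop k Q s X p ∘ f p) c = 0 := by
    have hcomp : toTop k Q s X p ∘ f p =
        (Submodule.mkQ _ ∘ₗ (lift f).restrictScalars k) ∘ of p :=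
      funext fun x => congrArg _ (lift_of f p x).symm
    rw [hcomp, ← LinearMap.map_finsupp_linearCombination]
    exact (Submodule.Quotient.mk_eq_zero _).2 hφ
  rw [linearIndependent_iff.1 hf c hc, map_zero]

lemma lift_injective (hX : IsTorsionFree k Q s X) (hD : DiagonalsIndependent k Q s X)
    {f : ∀ p, B p → X} (hf : ∀ p, LinearIndependent k (toTop k Q s X p ∘ f p))
    (hφ : Surjective (lift f : FreeOn k B →ₗ[NsQ k Q s] X)) :
    Injective (lift f : FreeOn k B →ₗ[NsQ k Q s] X) := by
  refine (injective_iff_map_eq_zero _).2 fun g hg => ?_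
  suffices h : ∀ g : LinearMap.ker (lift f : FreeOn k B →ₗ[NsQ k Q s] X), g = 0 from
    congrArg Subtype.val (h ⟨g, hg⟩)
  refine eq_zero_of_eV_smul_mem_range_incoming fun p g => hD.mem_range_incoming_ker hX hφ ?_
  obtain ⟨u, hu, v, hv, huv⟩ := Submodule.mem_sup.1 (eV_smul_mem_span_sup p (g : FreeOn k B))
  have hlift : lift f u = -lift f v := by
    rw [eq_neg_iff_add_eq_zero, ← map_add, huv, map_smul, g.2, smul_zero]
  obtain rfl : u = 0 := eq_zero_of_lift_mem_range_incoming (hf p) hu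
    (hlift ▸ neg_mem (map_mem_range_incoming _ hv))
  rw [zero_add] at huv
  rwa [huv] at hv

end FreeOn

end Lift

/-- A minimal generating set identifies the module with a free one. -/
theorem IsTorsionFree.projective_of_diagonalsIndependent {X : Type*} [AddCommGroup X]
    [Module k X] [Module (NsQ k Q s) X] [IsScalarTower k (NsQ k Q s) X] (hX : IsTorsionFree k Q s X)
    (hD : DiagonalsIndependent k Q s X) : Module.Projective (NsQ k Q s) X := by
  choose B f _ hspan hli using fun p => exists_linearIndependent' k (toTop k Q s X p)
  have hsurj : Surjective (FreeOn.lift f : FreeOn k B →ₗ[NsQ k Q s] X) :=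
    FreeOn.lift_surjective fun p x => hspan p ▸ Submodule.subset_span ⟨x, rfl⟩
  exact .of_equiv (.ofBijective (FreeOn.lift f) ⟨FreeOn.lift_injective hX hD hli hsurj, hsurj⟩)

end NsQ

end

/-- Let `Q` be a finite quiver, `s` a positive integer, and `N_s(Q)` the
nilpotent quiver algebra over a field `k`.  Then the global dimension of `N_s(Q)` is at
most `2`: every left `N_s(Q)`-module admits a projective resolution of length at most `2`. -/
theorem nsq_global_dimension_le_two (k : Type) [Field k] (Q : FinQuiver) (s : ℕ) (hs : 0 < s)
    (M : Type) [AddCommGroup M] [Module (NsQ k Q s) M] :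
    ∃ (P₀ P₁ P₂ : Type) (_ : AddCommGroup P₀) (_ : AddCommGroup P₁) (_ : AddCommGroup P₂)
      (_ : Module (NsQ k Q s) P₀) (_ : Module (NsQ k Q s) P₁) (_ : Module (NsQ k Q s) P₂)
      (f₂ : P₂ →ₗ[NsQ k Q s] P₁) (f₁ : P₁ →ₗ[NsQ k Q s] P₀) (f₀ : P₀ →ₗ[NsQ k Q s] M),
      Module.Projective (NsQ k Q s) P₀ ∧ Module.Projective (NsQ k Q s) P₁ ∧
      Module.Projective (NsQ k Q s) P₂ ∧
      Function.Injective f₂ ∧ Function.Exact f₂ f₁ ∧ Function.Exact f₁ f₀ ∧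
      Function.Surjective f₀ := by
  let : Module k M := Module.compHom M (algebraMap k (NsQ k Q s))
  have : IsScalarTower k (NsQ k Q s) M := .of_algebraMap_smul fun _ _ => rfl
  let π₀ : NsQ.FreeOn k (fun _ => M) →ₗ[NsQ k Q s] M := NsQ.FreeOn.lift fun _ => id
  let π₁ : NsQ.FreeOn k (fun _ => LinearMap.ker π₀) →ₗ[NsQ k Q s] LinearMap.ker π₀ :=
    NsQ.FreeOn.lift fun _ => id
  have hπ₀ : Function.Surjective π₀ :=
    NsQ.FreeOn.lift_surjective fun _ x => Submodule.subset_span ⟨x, rfl⟩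
  have hπ₁ : Function.Surjective π₁ :=
    NsQ.FreeOn.lift_surjective fun _ x => Submodule.subset_span ⟨x, rfl⟩
  have hker₀ : NsQ.IsTorsionFree k Q s (LinearMap.ker π₀) :=
    NsQ.FreeOn.isTorsionFree.of_injective (LinearMap.ker π₀).subtype Subtype.val_injective
  have hker₁ : NsQ.IsTorsionFree k Q s (LinearMap.ker π₁) :=
    NsQ.FreeOn.isTorsionFree.of_injective (LinearMap.ker π₁).subtype Subtype.val_injective
  refine ⟨_, _, _, inferInstance, inferInstance, inferInstance, inferInstance, inferInstance,
    inferInstance, (LinearMap.ker π₁).subtype, (LinearMap.ker π₀).subtype ∘ₗ π₁, π₀, inferInstance,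
    inferInstance, hker₁.projective_of_diagonalsIndependent
      (NsQ.FreeOn.diagonalsIndependent.ker hker₀ π₁),
    Subtype.val_injective, ?_, ?_, hπ₀⟩
  · exact (LinearMap.exact_subtype_ker_map π₁).comp_injective _ Subtype.val_injective rfl
  · exact hπ₁.comp_exact_iff_exact.2 (LinearMap.exact_subtype_ker_map π₀)
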